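/- Let G be a simple graph, let π be an almost equitable partition of G with characteristic matrix P_π and quotient Laplacian L_π, and let ρ = {S_1,…,S_m} be a π-regular almost equitable partition of the quotient graph G_π with characteristic matrix P_ρ. Let K̃ = diag(c_1,…,c_m), where c_j is the common cardinality of the cells of π belonging to S_j, let π_ρ be the ρ-merge of π, and set L_{π_ρ} = (P_{π_ρ}^T P_{π_ρ})^{−1} P_{π_ρ}^T L(G) P_{π_ρ}. Then L_π^T P_ρ = P_ρ (K̃ L_{π_ρ} K̃^{−1}). -/

import Mathlib

open Classical Matrix

noncomputable def lap {n : ℕ} (G : SimpleGraph (Fin n)) : Matrix (Fin n) (Fin n) ℝ :=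
  Matrix.of fun i j =>
    (if i = j then ((G.neighborSet i).ncard : ℝ) else 0) - (if G.Adj i j then 1 else 0)

def IsTwin {n : ℕ} (G : SimpleGraph (Fin n)) (u v : Fin n) : Prop :=
  u ≠ v ∧ G.neighborSet u \ {v} = G.neighborSet v \ {u}

def IsEigenvalue {n : ℕ} (M : Matrix (Fin n) (Fin n) ℝ) (μ : ℝ) : Prop :=
  ∃ x : Fin n → ℝ, x ≠ 0 ∧ M.mulVec x = μ • x

def HasSimpleSpectrum {n : ℕ} (M : Matrix (Fin n) (Fin n) ℝ) : Prop :=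
  ∃ μ : Fin n → ℝ, Function.Injective μ ∧ ∀ i, IsEigenvalue M (μ i)

def Controllable {n : ℕ} (M : Matrix (Fin n) (Fin n) ℝ) (b : Fin n → ℝ) : Prop :=
  Submodule.span ℝ (Set.range fun k : Fin n => (M ^ (k : ℕ)).mulVec b) = ⊤

def StronglyUncontrollable {n : ℕ} (G : SimpleGraph (Fin n)) : Prop :=
  G.Connected ∧ HasSimpleSpectrum (lap G) ∧
    ∀ b : Fin n → ℝ, (∀ i, b i = 0 ∨ b i = 1) → ¬ Controllable (lap G) b

def Pmat {n k : ℕ} (c : Fin n → Fin k) : Matrix (Fin n) (Fin k) ℝ :=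
  Matrix.of fun i j => if c i = j then 1 else 0

def IsAEP {n k : ℕ} (G : SimpleGraph (Fin n)) (c : Fin n → Fin k) : Prop :=
  ∀ i j : Fin k, i ≠ j → ∀ x y : Fin n, c x = i → c y = i →
    (G.neighborSet x ∩ {z | c z = j}).ncard = (G.neighborSet y ∩ {z | c z = j}).ncard

noncomputable def quotLap {n k : ℕ} (G : SimpleGraph (Fin n)) (c : Fin n → Fin k) :
    Matrix (Fin k) (Fin k) ℝ :=
  ((Pmat c)ᵀ * Pmat c)⁻¹ * (Pmat c)ᵀ * lap G * Pmat c

def IsQuotAEP {k m : ℕ} (Lq : Matrix (Fin k) (Fin k) ℝ) (r : Fin k → Fin m) : Prop :=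
  ∀ a b : Fin m, a ≠ b → ∀ C C' : Fin k, r C = a → r C' = a →
    ∑ C'' ∈ Finset.univ.filter (fun C'' => r C'' = b), Lq C C'' =
      ∑ C'' ∈ Finset.univ.filter (fun C'' => r C'' = b), Lq C' C''

def IsGraphAut {n : ℕ} (G : SimpleGraph (Fin n)) (σ : Equiv.Perm (Fin n)) : Prop :=
  ∀ x y, G.Adj x y ↔ G.Adj (σ x) (σ y)

def joinOne {n : ℕ} (G : SimpleGraph (Fin n)) : SimpleGraph (Fin (n + 1)) where
  Adj x y := x ≠ y ∧ ((x : ℕ) = n ∨ (y : ℕ) = n ∨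
    ∃ (hx : (x : ℕ) < n) (hy : (y : ℕ) < n), G.Adj ⟨x, hx⟩ ⟨y, hy⟩)
  symm := by
    constructor
    rintro x y ⟨hxy, h⟩
    refine ⟨hxy.symm, ?_⟩
    rcases h with h | h | ⟨hx, hy, h⟩
    exacts [Or.inr (Or.inl h), Or.inl h, Or.inr (Or.inr ⟨hy, hx, h.symm⟩)]
  loopless := ⟨fun x h => h.1 rfl⟩

def joinTwo {n : ℕ} (G : SimpleGraph (Fin n)) : SimpleGraph (Fin (n + 2)) where
  Adj x y := x ≠ y ∧ (((x : ℕ) < n ∧ n ≤ (y : ℕ)) ∨ ((y : ℕ) < n ∧ n ≤ (x : ℕ)) ∨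
    ∃ (hx : (x : ℕ) < n) (hy : (y : ℕ) < n), G.Adj ⟨x, hx⟩ ⟨y, hy⟩)
  symm := by
    constructor
    rintro x y ⟨hxy, h⟩
    refine ⟨hxy.symm, ?_⟩
    rcases h with h | h | ⟨hx, hy, h⟩
    exacts [Or.inr (Or.inl h), Or.inl h, Or.inr (Or.inr ⟨hy, hx, h.symm⟩)]
  loopless := ⟨fun x h => h.1 rfl⟩

def addPendant {n : ℕ} (G : SimpleGraph (Fin n)) (v : Fin n) : SimpleGraph (Fin (n + 1)) where
  Adj x y := ((x : ℕ) = n ∧ (y : ℕ) = (v : ℕ)) ∨ ((y : ℕ) = n ∧ (x : ℕ) = (v : ℕ)) ∨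
    ∃ (hx : (x : ℕ) < n) (hy : (y : ℕ) < n), G.Adj ⟨x, hx⟩ ⟨y, hy⟩
  symm := by
    constructor
    rintro x y (h | h | ⟨hx, hy, h⟩)
    exacts [Or.inr (Or.inl h), Or.inl h, Or.inr (Or.inr ⟨hy, hx, h.symm⟩)]
  loopless := by
    constructor
    intro x h
    have hv := v.isLt
    rcases h with ⟨h1, h2⟩ | ⟨h1, h2⟩ | ⟨hx, hy, h⟩
    · omega
    · omega
    · exact G.loopless.irrefl _ h

/-!
Write `P`, `S` for the characteristic matrices of `π`, `ρ` and `N = PᵀP`, the diagonal matrix of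
cell sizes. Since the rows of `L_π` have equal sums, almost equitability of `ρ` also controls the
diagonal blocks, so `L_π S = S B` for some `B`; as `P S` is the characteristic matrix of `π_ρ`,
multiplying by `SᵀN` identifies `B` with `L_{π_ρ}`. Symmetry of the Laplacian gives
`L_πᵀ = N L_π N⁻¹` and regularity of `ρ` gives `N S = S K̃`, whence
`L_πᵀ S = N L_π S K̃⁻¹ = N S B K̃⁻¹ = S K̃ B K̃⁻¹`. For a non-symmetric matrix in place of the
Laplacian the same computation applies once the left-hand side is built from its transpose.
-/

section Compression

variable {R V ι κ : Type*} [CommRing R] [Fintype V] [Fintype ι] [Fintype κ]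
  [DecidableEq ι] [DecidableEq κ]

/-- The compression of `M` to the column space of `P`: when `PᵀP` is invertible, the matrix, in the
basis of columns of `P`, of `M` followed by orthogonal projection. For the characteristic matrix of
a partition it is the quotient of `M`; `quotLap G c` is `compression (Pmat c) (lap G)`. -/
noncomputable def compression (P : Matrix V ι R) (M : Matrix V V R) : Matrix ι ι R :=
  (Pᵀ * P)⁻¹ * Pᵀ * M * P

theorem gram_mul_compression {P : Matrix V ι R} (hP : IsUnit (Pᵀ * P).det) (M : Matrix V V R) :
    Pᵀ * P * compression P M = Pᵀ * M * P := by
  simp only [compression, Matrix.mul_assoc (Pᵀ * P)⁻¹]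
  exact mul_nonsing_inv_cancel_left _ _ hP

theorem compression_eq_of_gram_mul_eq {P : Matrix V ι R} (hP : IsUnit (Pᵀ * P).det)
    {M : Matrix V V R} {B : Matrix ι ι R} (h : Pᵀ * P * B = Pᵀ * M * P) :
    compression P M = B := by
  simp only [compression, Matrix.mul_assoc (Pᵀ * P)⁻¹, ← h]
  exact nonsing_inv_mul_cancel_left _ _ hP

theorem transpose_compression_transpose (P : Matrix V ι R) (M : Matrix V V R) :
    (compression P Mᵀ)ᵀ = Pᵀ * M * P * (Pᵀ * P)⁻¹ := by
  simp only [compression, transpose_mul, transpose_transpose, transpose_nonsing_inv,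
    Matrix.mul_assoc]

theorem compression_mulVec_eq_smul {P : Matrix V ι R} (hP : IsUnit (Pᵀ * P).det)
    {M : Matrix V V R} {x : ι → R} {s : R} (h : M *ᵥ (P *ᵥ x) = s • (P *ᵥ x)) :
    compression P M *ᵥ x = s • x :=
  calc compression P M *ᵥ x
      = ((Pᵀ * P)⁻¹ * Pᵀ) *ᵥ (M *ᵥ (P *ᵥ x)) := by
        simp only [compression, mulVec_mulVec, Matrix.mul_assoc]
    _ = s • (((Pᵀ * P)⁻¹ * (Pᵀ * P)) *ᵥ x) := by
        rw [h, mulVec_smul, mulVec_mulVec, Matrix.mul_assoc]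
    _ = s • x := by rw [nonsing_inv_mul _ hP, one_mulVec]

theorem compression_mul {P : Matrix V ι R} {S : Matrix ι κ R} {M : Matrix V V R}
    {B : Matrix κ κ R} (hP : IsUnit (Pᵀ * P).det) (hPS : IsUnit ((P * S)ᵀ * (P * S)).det)
    (hB : compression P M * S = S * B) : compression (P * S) M = B := by
  apply compression_eq_of_gram_mul_eq hPS
  calc (P * S)ᵀ * (P * S) * B
      = Sᵀ * (Pᵀ * P * (S * B)) := by simp only [transpose_mul, Matrix.mul_assoc]
    _ = Sᵀ * (Pᵀ * P * compression P M) * S := by rw [← hB]; simp only [Matrix.mul_assoc]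
    _ = Sᵀ * (Pᵀ * M * P) * S := by rw [gram_mul_compression hP]
    _ = (P * S)ᵀ * M * (P * S) := by simp only [transpose_mul, Matrix.mul_assoc]

theorem nonsing_inv_mul_eq_mul_nonsing_inv {N : Matrix ι ι R} {D : Matrix κ κ R}
    {S : Matrix ι κ R} (hN : IsUnit N.det) (hD : IsUnit D.det) (h : N * S = S * D) :
    N⁻¹ * S = S * D⁻¹ :=
  calc N⁻¹ * S = N⁻¹ * (S * D) * D⁻¹ := by
        rw [← Matrix.mul_assoc, mul_nonsing_inv_cancel_right _ _ hD]
    _ = S * D⁻¹ := by rw [← h, nonsing_inv_mul_cancel_left _ _ hN]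

theorem transpose_compression_transpose_mul {P : Matrix V ι R} {S : Matrix ι κ R}
    {M : Matrix V V R} {B D : Matrix κ κ R} (hP : IsUnit (Pᵀ * P).det) (hD : IsUnit D.det)
    (hS : Pᵀ * P * S = S * D) (hB : compression P M * S = S * B) :
    (compression P Mᵀ)ᵀ * S = S * (D * B * D⁻¹) :=
  calc (compression P Mᵀ)ᵀ * S
      = Pᵀ * M * P * ((Pᵀ * P)⁻¹ * S) := by
        rw [transpose_compression_transpose, Matrix.mul_assoc]
    _ = Pᵀ * P * (compression P M * S) * D⁻¹ := by
        rw [nonsing_inv_mul_eq_mul_nonsing_inv hP hD hS, ← gram_mul_compression hP]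
        simp only [Matrix.mul_assoc]
    _ = Pᵀ * P * S * B * D⁻¹ := by rw [hB]; simp only [Matrix.mul_assoc]
    _ = S * (D * B * D⁻¹) := by rw [hS]; simp only [Matrix.mul_assoc]

end Compression

section PartitionMatrix

variable {R V ι κ : Type*} [Semiring R] [DecidableEq ι]

variable (R) in
/-- The characteristic matrix of the partition of `V` into the fibres of `c`, with entry `1` at
`(v, c v)` and `0` elsewhere; it is `Pmat` over arbitrary index types and coefficients. -/
def partitionMatrix (c : V → ι) : Matrix V ι R :=
  (1 : Matrix ι ι R).submatrix c id

theorem partitionMatrix_mul [Fintype ι] (c : V → ι) (A : Matrix ι κ R) :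
    partitionMatrix R c * A = A.submatrix c id :=
  one_submatrix_mul c (Equiv.refl ι) A

theorem partitionMatrix_comp [Fintype ι] [DecidableEq κ] (c : V → ι) (r : ι → κ) :
    partitionMatrix R (r ∘ c) = partitionMatrix R c * partitionMatrix R r := by
  rw [partitionMatrix_mul]
  rfl

theorem partitionMatrix_mulVec_one [Fintype ι] (c : V → ι) : partitionMatrix R c *ᵥ 1 = 1 := by
  ext v
  simp [partitionMatrix, mulVec, dotProduct, one_apply]

theorem mul_partitionMatrix_apply [Fintype V] (L : Matrix κ V R) (c : V → ι) (i : κ) (j : ι) :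
    (L * partitionMatrix R c) i j = ∑ v with c v = j, L i v := by
  simp [partitionMatrix, Matrix.mul_apply, one_apply, Finset.sum_filter]

theorem transpose_partitionMatrix_mul_self [Fintype V] (c : V → ι) :
    (partitionMatrix R c)ᵀ * partitionMatrix R c =
      diagonal fun j => ({v | c v = j}.ncard : R) := by
  ext i j
  rw [mul_partitionMatrix_apply, diagonal_apply]
  rcases eq_or_ne i j with rfl | hij
  · simp +contextual [partitionMatrix, one_apply, Set.ncard_eq_toFinset_card',
      Finset.filter_filter]
  · rw [if_neg hij]
    refine Finset.sum_eq_zero fun v hv => ?_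
    simp [partitionMatrix, (Finset.mem_filter.1 hv).2, hij.symm]

theorem diagonal_comp_mul_partitionMatrix [Fintype V] [DecidableEq V] [Fintype ι] (d : ι → R)
    (c : V → ι) :
    diagonal (d ∘ c) * partitionMatrix R c = partitionMatrix R c * diagonal d := by
  ext v j
  rw [diagonal_mul, mul_diagonal]
  by_cases h : c v = j <;> simp [partitionMatrix, one_apply, h]

end PartitionMatrix

theorem isUnit_det_diagonal_iff {K ι : Type*} [Field K] [Fintype ι] [DecidableEq ι] {d : ι → K} :
    IsUnit (diagonal d).det ↔ ∀ i, d i ≠ 0 := by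
  rw [det_diagonal, isUnit_iff_ne_zero, Finset.prod_ne_zero_iff]
  simp only [Finset.mem_univ, true_imp_iff]

theorem ncard_fiber_ne_zero {V ι : Type*} [Finite V] {c : V → ι} (hc : Function.Surjective c)
    (j : ι) : {v | c v = j}.ncard ≠ 0 :=
  have ⟨_, hv⟩ := hc j
  Set.ncard_ne_zero_of_mem hv

theorem isUnit_det_gram_partitionMatrix {K V ι : Type*} [Field K] [CharZero K] [Fintype V]
    [Fintype ι] [DecidableEq ι] {c : V → ι} (hc : Function.Surjective c) :
    IsUnit ((partitionMatrix K c)ᵀ * partitionMatrix K c).det := by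
  rw [transpose_partitionMatrix_mul_self, isUnit_det_diagonal_iff]
  exact fun j => Nat.cast_ne_zero.2 (ncard_fiber_ne_zero hc j)

section AlmostEquitable

variable {R ι κ : Type*} [Ring R] [Fintype ι] [DecidableEq κ]

/-- The partition of `ι` into the fibres of `r` is almost equitable for the matrix `L`: within each
cell, the row sums of `L` over any *other* cell agree. For `ι = Fin k` and `κ = Fin m` over `ℝ` this
is `IsQuotAEP`. -/
def IsAlmostEquitable (L : Matrix ι ι R) (r : ι → κ) : Prop :=
  ∀ a b, a ≠ b → ∀ i i', r i = a → r i' = a →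
    ∑ j with r j = b, L i j = ∑ j with r j = b, L i' j

-- A block sum over the cell of `i` itself is the total row sum minus the other block sums.
theorem IsAlmostEquitable.factorsThrough_row [Finite κ] {L : Matrix ι ι R} {r : ι → κ}
    (h : IsAlmostEquitable L r) (hsum : (L *ᵥ 1).FactorsThrough r) :
    (L * partitionMatrix R r).row.FactorsThrough r := by
  cases nonempty_fintype κ
  intro i i' hii'
  have off_block : ∀ b ≠ r i,
      (L * partitionMatrix R r) i b = (L * partitionMatrix R r) i' b := fun b hb => by
    simpa only [mul_partitionMatrix_apply] using h (r i) b hb.symm i i' rfl hii'.symm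
  have row_sum : ∑ b, (L * partitionMatrix R r) i b = ∑ b, (L * partitionMatrix R r) i' b := by
    have hsum' := hsum hii'
    rw [← partitionMatrix_mulVec_one r, mulVec_mulVec] at hsum'
    simpa only [mulVec, dotProduct, Pi.one_apply, mul_one] using hsum'
  funext b
  rcases eq_or_ne b (r i) with rfl | hb
  · rw [← Finset.add_sum_erase _ _ (Finset.mem_univ (r i)),
      ← Finset.add_sum_erase _ _ (Finset.mem_univ (r i)),
      Finset.sum_congr rfl fun b hb => off_block b (Finset.ne_of_mem_erase hb)] at row_sum
    exact add_right_cancel row_sum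
  · exact off_block b hb

theorem IsAlmostEquitable.exists_mul_partitionMatrix_eq [Fintype κ] {L : Matrix ι ι R}
    {r : ι → κ} (h : IsAlmostEquitable L r) (hsum : (L *ᵥ 1).FactorsThrough r) :
    ∃ B : Matrix κ κ R, L * partitionMatrix R r = partitionMatrix R r * B := by
  refine ⟨of (Function.extend r (L * partitionMatrix R r).row fun _ => 0), ?_⟩
  ext i b
  rw [partitionMatrix_mul, submatrix_apply, of_apply, (h.factorsThrough_row hsum).extend_apply]
  rfl

end AlmostEquitable

theorem lap_eq_lapMatrix {n : ℕ} (G : SimpleGraph (Fin n)) : lap G = G.lapMatrix ℝ := by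
  ext i j
  rw [lap, of_apply, ← Set.fintypeCard_eq_ncard, G.card_neighborSet_eq_degree]
  simp only [SimpleGraph.lapMatrix, SimpleGraph.degMatrix, Matrix.sub_apply, diagonal_apply,
    SimpleGraph.adjMatrix_apply]

theorem transpose_lap {n : ℕ} (G : SimpleGraph (Fin n)) : (lap G)ᵀ = lap G := by
  rw [lap_eq_lapMatrix]
  exact G.isSymm_lapMatrix (R := ℝ)

theorem lap_mulVec_one {n : ℕ} (G : SimpleGraph (Fin n)) : lap G *ᵥ (1 : Fin n → ℝ) = 0 := by
  rw [lap_eq_lapMatrix]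
  exact G.lapMatrix_mulVec_const_eq_zero

theorem stmt13_general {K V ι κ : Type*} [Field K] [CharZero K] [Fintype V] [Fintype ι]
    [Fintype κ] [DecidableEq ι] [DecidableEq κ] {M : Matrix V V K} {s : K}
    (hM : M *ᵥ 1 = s • 1) {c : V → ι} (hc : Function.Surjective c)
    {r : ι → κ} (hr : Function.Surjective r)
    (hρ : IsAlmostEquitable (compression (partitionMatrix K c) M) r)
    {card : κ → ℕ} (hcard : ∀ i, {v | c v = i}.ncard = card (r i)) :
    (compression (partitionMatrix K c) Mᵀ)ᵀ * partitionMatrix K r =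
      partitionMatrix K r * (diagonal (fun j => (card j : K)) *
        compression (partitionMatrix K (r ∘ c)) M * (diagonal fun j => (card j : K))⁻¹) := by
  have hP := isUnit_det_gram_partitionMatrix (K := K) hc
  have hPS := isUnit_det_gram_partitionMatrix (K := K) (hr.comp hc)
  have hD : IsUnit (diagonal fun j => (card j : K)).det :=
    isUnit_det_diagonal_iff.2 <| hr.forall.2 fun i =>
      hcard i ▸ Nat.cast_ne_zero.2 (ncard_fiber_ne_zero hc i)
  have hS : (partitionMatrix K c)ᵀ * partitionMatrix K c * partitionMatrix K r =
      partitionMatrix K r * diagonal fun j => (card j : K) := by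
    simp only [transpose_partitionMatrix_mul_self, hcard]
    exact diagonal_comp_mul_partitionMatrix (fun j => (card j : K)) r
  have hsum : (compression (partitionMatrix K c) M *ᵥ 1).FactorsThrough r := by
    rw [compression_mulVec_eq_smul hP (by rwa [partitionMatrix_mulVec_one])]
    exact fun _ _ _ => rfl
  obtain ⟨B, hB⟩ := hρ.exists_mul_partitionMatrix_eq hsum
  rw [partitionMatrix_comp] at hPS ⊢
  rw [compression_mul hP hPS hB]
  exact transpose_compression_transpose_mul hP hD hS hB

theorem stmt13 {n k m : ℕ} (G : SimpleGraph (Fin n))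
    (c : Fin n → Fin k) (hcsurj : Function.Surjective c) (hπ : IsAEP G c)
    (r : Fin k → Fin m) (hrsurj : Function.Surjective r)
    (hρ : IsQuotAEP (quotLap G c) r)
    (card : Fin m → ℕ) (hcard : ∀ j : Fin k, {x | c x = j}.ncard = card (r j)) :
    (quotLap G c)ᵀ * Pmat r =
      Pmat r * (Matrix.diagonal (fun j => (card j : ℝ)) * quotLap G (r ∘ c) *
        (Matrix.diagonal (fun j => (card j : ℝ)))⁻¹) := by
  have h := stmt13_general (s := 0) (M := lap G) (by rw [lap_mulVec_one, zero_smul])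
    hcsurj hrsurj hρ hcard
  rwa [transpose_lap] at h
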